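/- Fix q ≥ 1 and a finite list f_1, …, f_s of real polynomials in 2q variables, each symmetric in the sense that f_t(x, y) = f_t(y, x) for all x, y ∈ ℝ^q, together with sign conditions σ_t ∈ {'≥ 0', '> 0'}. Then there exist constants ε > 0 and C > 0 (depending only on the f_t) such that for every n ≥ 1 there is a natural number m ≤ C·n^{1−ε} and a symmetric function G : {0,1}^m × {0,1}^m → {0,1} with the property: for every tuple of points x_1, …, x_n ∈ ℝ^q there exists F : {1,…,n} → {0,1}^m such that for all i ≠ j, G(F(i), F(j)) = 1 if and only if for every t, f_t(x_i, x_j) satisfies the sign condition σ_t. -/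

import Mathlib

/-!
The sign of a polynomial `f (x, y)` is the sign of a bilinear form of bounded rank evaluated at
`(φ x, ψ y)`. A linear dependency among `k` vectors forbids one of the `2 ^ k` sign patterns on
them, so by the Sauer–Shelah lemma only polynomially many patterns occur on `k` points, and the same
holds for finite conjunctions of sign conditions.

On the other hand, if some rows of an `n × n` adjacency matrix pairwise differ in more than `D`
places, then about `(n / D) log n` random columns already tell them all apart; hence there are
only polynomially many in `(n / D) log n` of them, and a maximal such family is a small net. A
vertex can therefore be labelled by its adjacencies to the net, its closest row in the net, and the
at most `D` exceptions, at `log n` bits each. Taking `D = n ^ (1 - δ)` with `δ` small makes every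
part of the label sublinear.
-/

open Set Filter Asymptotics

section Shatter

variable {X Y : Type*}

/-- The shatter function of `R` is at most `k ↦ (k + 1) ^ d`: on any `k` points of `X`, at most
`(k + 1) ^ d` distinct traces `j ↦ R y (a j)` arise as `y` varies over `Y`. -/
def ShatterBound (R : Y → X → Prop) (d : ℕ) : Prop :=
  ∀ (k : ℕ) (a : Fin k → X), (range fun y => R y ∘ a).ncard ≤ (k + 1) ^ d

theorem sum_Iic_choose_le_pow (n d : ℕ) : ∑ i ∈ Finset.Iic d, n.choose i ≤ (n + 1) ^ d := by
  rw [add_pow, Nat.range_succ_eq_Iic]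
  refine Finset.sum_le_sum fun i hi => (Nat.choose_le_pow n i).trans ?_
  simpa using Nat.le_mul_of_pos_right _ (Nat.choose_pos (Finset.mem_Iic.1 hi))

open Classical in
theorem shatterBound_of_forall_surjective {R : Y → X → Prop} {d : ℕ}
    (h : ∀ (s : ℕ) (b : Fin s → X), Function.Surjective (fun y => R y ∘ b) → s ≤ d) :
    ShatterBound R d := by
  intro k a
  let traces : Finset (Finset (Fin k)) := {S | ∃ y, ∀ j, j ∈ S ↔ R y (a j)}
  have hvc : traces.vcDim ≤ d := by
    refine Finset.sup_le fun T hT => h T.card (a ∘ Subtype.val ∘ T.equivFin.symm) fun p => ?_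
    obtain ⟨S, hS, hTS⟩ := Finset.mem_shatterer.1 hT
      (T.filter_subset fun j => ∃ hj : j ∈ T, p (T.equivFin ⟨j, hj⟩))
    obtain ⟨y, hy⟩ := (Finset.mem_filter.1 hS).2
    refine ⟨y, funext fun i => propext ?_⟩
    simpa [hy] using Finset.ext_iff.1 hTS (T.equivFin.symm i)
  have hrange :
      (range fun y => R y ∘ a) ⊆ (fun S j => j ∈ S) '' (traces : Set (Finset (Fin k))) := by
    rintro _ ⟨y, rfl⟩
    refine ⟨({j | R y (a j)} : Finset (Fin k)), ?_, by ext; simp⟩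
    exact Finset.mem_filter.2 ⟨Finset.mem_univ _, y, fun j => by simp⟩
  calc (range fun y => R y ∘ a).ncard
      ≤ ((fun S j => j ∈ S) '' (traces : Set (Finset (Fin k)))).ncard := ncard_le_ncard hrange
    _ ≤ traces.card := (ncard_image_le).trans_eq (ncard_coe_finset traces)
    _ ≤ traces.shatterer.card := traces.card_le_card_shatterer
    _ ≤ ∑ i ∈ Finset.Iic traces.vcDim, k.choose i := by
      simpa using Finset.card_shatterer_le_sum_vcDim (𝒜 := traces)
    _ ≤ (k + 1) ^ traces.vcDim := sum_Iic_choose_le_pow k _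
    _ ≤ (k + 1) ^ d := Nat.pow_le_pow_right k.succ_pos hvc

namespace ShatterBound

theorem comp {X' Y' : Type*} {R : Y → X → Prop} {d : ℕ} (hR : ShatterBound R d) (v : Y' → Y)
    (u : X' → X) : ShatterBound (fun y x => R (v y) (u x)) d := fun k a =>
  (ncard_le_ncard (range_comp_subset_range v fun y => R y ∘ u ∘ a)).trans (hR k (u ∘ a))

theorem not {R : Y → X → Prop} {d : ℕ} (hR : ShatterBound R d) :
    ShatterBound (fun y x => ¬ R y x) d := by
  intro k a
  have himage : (range fun y => (fun x => ¬ R y x) ∘ a) =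
      (fun p : Fin k → Prop => fun j => ¬ p j) '' range fun y => R y ∘ a := by
    rw [← range_comp]; rfl
  rw [himage]
  exact (ncard_image_le).trans (hR k a)

theorem forall_index {T : Type*} [Fintype T] {R : T → Y → X → Prop} {d : T → ℕ}
    (hR : ∀ t, ShatterBound (R t) (d t)) : ShatterBound (fun y x => ∀ t, R t y x) (∑ t, d t) := by
  intro k a
  have hsub : (range fun y => (fun x => ∀ t, R t y x) ∘ a) ⊆
      (fun (p : T → Fin k → Prop) j => ∀ t, p t j) ''
        univ.pi fun t => range fun y => R t y ∘ a := by
    rintro _ ⟨y, rfl⟩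
    exact ⟨fun t => R t y ∘ a, fun t _ => mem_range_self y, rfl⟩
  calc _ ≤ (univ.pi fun t => range fun y => R t y ∘ a).ncard :=
        (ncard_le_ncard hsub).trans ncard_image_le
    _ = ∏ t, (range fun y => R t y ∘ a).ncard := by
      simp [ncard, encard_pi_eq_prod_encard]
    _ ≤ ∏ t, (k + 1) ^ d t := Finset.prod_le_prod' fun t _ => hR t k a
    _ = (k + 1) ^ ∑ t, d t := Finset.prod_pow_eq_pow_sum ..

end ShatterBound

end Shatter

section Sign

theorem exists_sum_smul_eq_zero_and_pos {κ K E : Type*} [Fintype κ] [Ring K]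
    [LinearOrder K] [IsStrictOrderedRing K] [AddCommGroup E] [Module K E] {v : κ → E}
    (hv : ¬ LinearIndependent K v) : ∃ c : κ → K, ∑ j, c j • v j = 0 ∧ ∃ j, 0 < c j := by
  obtain ⟨c, hc, j, hj⟩ := Fintype.not_linearIndependent_iff.1 hv
  rcases hj.lt_or_gt with hneg | hpos
  · exact ⟨-c, by simp [hc], j, by simpa using hneg⟩
  · exact ⟨c, hc, j, hpos⟩

variable {X Y K E : Type*} [CommRing K] [LinearOrder K] [IsStrictOrderedRing K]
  [AddCommGroup E] [Module K E]

theorem linearIndependent_of_surjective_sign {κ : Type*} [Finite κ] (v : κ → E)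
    (ψ : Y → Module.Dual K E) (h : Function.Surjective fun y j => 0 < ψ y (v j)) :
    LinearIndependent K v := by
  cases nonempty_fintype κ
  by_contra hdep
  obtain ⟨c, hc, i, hi⟩ := exists_sum_smul_eq_zero_and_pos hdep
  obtain ⟨y, hy⟩ := h fun j => 0 < c j
  have hsign : ∀ j, 0 < ψ y (v j) ↔ 0 < c j := fun j => Iff.of_eq (congrFun hy j)
  have hpos : 0 < ∑ j, c j * ψ y (v j) := by
    refine Finset.sum_pos' (fun j _ => ?_) ⟨i, Finset.mem_univ i, mul_pos hi ((hsign i).2 hi)⟩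
    rcases lt_or_ge 0 (c j) with hj | hj
    · exact (mul_pos hj ((hsign j).2 hj)).le
    · exact mul_nonneg_of_nonpos_of_nonpos hj (not_lt.1 fun h => hj.not_gt ((hsign j).1 h))
  have hzero : ∑ j, c j * ψ y (v j) = 0 := by simpa using congrArg (ψ y) hc
  exact hpos.ne' hzero

variable [Module.Finite K E]

theorem shatterBound_dual_pos (ψ : Y → Module.Dual K E) (φ : X → E) :
    ShatterBound (fun y x => 0 < ψ y (φ x)) (Module.finrank K E) :=
  shatterBound_of_forall_surjective fun s b hb => by
    simpa using (linearIndependent_of_surjective_sign (φ ∘ b) ψ hb).fintype_card_le_finrank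

theorem shatterBound_dual_nonneg (ψ : Y → Module.Dual K E) (φ : X → E) :
    ShatterBound (fun y x => 0 ≤ ψ y (φ x)) (Module.finrank K E) := by
  simpa using (shatterBound_dual_pos (fun y => -ψ y) φ).not

end Sign

section Polynomial

open MvPolynomial

theorem eval_sumElim_eq_sum_sumAlgEquiv {τ τ' K : Type*} [CommSemiring K]
    (p : MvPolynomial (τ ⊕ τ') K) (x : τ → K) (y : τ' → K) :
    eval (Sum.elim x y) p =
      ∑ d ∈ (sumAlgEquiv K τ τ' p).support,
        eval y (coeff d (sumAlgEquiv K τ τ' p)) * ∏ i ∈ d.support, x i ^ d i := by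
  have hiter : eval (Sum.elim x y) p = eval₂ (eval y) x (sumAlgEquiv K τ τ' p) := by
    induction p using MvPolynomial.induction_on with
    | C r => simp
    | add p q hp hq => simp [hp, hq, eval₂_add]
    | mul_X p i hp => rcases i with i | i <;> simp [hp, eval₂_mul]
  rw [hiter, eval₂_eq]

theorem exists_shatterBound_sign_eval {τ τ' K : Type*} [CommRing K] [LinearOrder K]
    [IsStrictOrderedRing K] (p : MvPolynomial (τ ⊕ τ') K) (strict : Bool) :
    ∃ d, ShatterBound (fun (x : τ → K) (y : τ' → K) =>
      cond strict (0 < eval (Sum.elim x y) p) (0 ≤ eval (Sum.elim x y) p)) d := by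
  let P := sumAlgEquiv K τ τ' p
  let ψ (x : τ → K) : Module.Dual K (P.support → K) :=
    Fintype.linearCombination K fun d => ∏ i ∈ d.1.support, x i ^ d.1 i
  let φ (y : τ' → K) (d : P.support) : K := eval y (coeff d.1 P)
  have heval : ∀ x y, eval (Sum.elim x y) p = ψ x (φ y) := fun x y => by
    rw [eval_sumElim_eq_sum_sumAlgEquiv, ← Finset.sum_coe_sort]
    simp [ψ, φ, P, Fintype.linearCombination_apply]
  simp only [heval]
  cases strict
  · exact ⟨_, shatterBound_dual_nonneg ψ φ⟩
  · exact ⟨_, shatterBound_dual_pos ψ φ⟩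

end Polynomial

section Hamming

variable {V β : Type*} [Fintype V] [DecidableEq β]

variable (V β) in
/-- The relation of being at Hamming distance at most `D`, so that `SetRel.IsSeparated` and
`SetRel.IsCover` express packings and nets for the Hamming distance. -/
def hammingRel (D : ℕ) : SetRel (V → β) (V → β) :=
  {p | hammingDist p.1 p.2 ≤ D}

instance (D : ℕ) : (hammingRel V β D).IsRefl := ⟨fun x => by simp [hammingRel]⟩

instance (D : ℕ) : (hammingRel V β D).IsSymm :=
  ⟨fun x y h => (hammingDist_comm y x).trans_le h⟩

theorem card_filter_eq_le_of_lt_hammingDist {x y : V → β} {D : ℕ} (h : D < hammingDist x y) :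
    Finset.card {v | x v = y v} ≤ Fintype.card V - D := by
  have hsum : Finset.card {v | x v = y v} + hammingDist x y = Fintype.card V :=
    Finset.card_filter_add_card_filter_not fun v => x v = y v
  lia

/-- Union bound: each of the at most `#P ^ 2` pairs from `P` agrees on at most `|V| - D`
coordinates, hence is identified by at most `(|V| - D) ^ k` of the `|V| ^ k` samples, and some
sample remains. -/
theorem exists_injOn_comp_of_isSeparated {P : Finset (V → β)} {D k : ℕ}
    (hP : (hammingRel V β D).IsSeparated P)
    (hk : P.card ^ 2 * (Fintype.card V - D) ^ k < Fintype.card V ^ k) :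
    ∃ a : Fin k → V, InjOn (fun x => x ∘ a) (P : Set (V → β)) := by
  classical
  by_contra! hcollide
  have hcover : (Finset.univ : Finset (Fin k → V)) ⊆
      P.offDiag.biUnion fun p => Fintype.piFinset fun _ => {v | p.1 v = p.2 v} := by
    intro a _
    obtain ⟨x, hx, y, hy, hxy, hne⟩ : ∃ x ∈ P, ∃ y ∈ P, x ∘ a = y ∘ a ∧ x ≠ y := by
      simpa [InjOn] using hcollide a
    simp only [Finset.mem_biUnion, Finset.mem_offDiag, Fintype.mem_piFinset, Finset.mem_filter]
    exact ⟨(x, y), ⟨hx, hy, hne⟩, fun j => ⟨Finset.mem_univ _, congrFun hxy j⟩⟩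
  have hagree : ∀ p ∈ P.offDiag,
      (Fintype.piFinset fun _ : Fin k => ({v | p.1 v = p.2 v} : Finset V)).card ≤
        (Fintype.card V - D) ^ k := by
    rintro ⟨x, y⟩ hp
    obtain ⟨hx, hy, hne⟩ := Finset.mem_offDiag.1 hp
    rw [Fintype.card_piFinset_const]
    exact Nat.pow_le_pow_left
      (card_filter_eq_le_of_lt_hammingDist (not_le.1 (hP hx hy hne))) k
  have hpairs : P.offDiag.card ≤ P.card ^ 2 := by
    rw [Finset.offDiag_card, sq]
    exact Nat.sub_le _ _
  refine hk.not_ge ?_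
  calc Fintype.card V ^ k = (Finset.univ : Finset (Fin k → V)).card := by simp
    _ ≤ P.offDiag.card * (Fintype.card V - D) ^ k :=
      (Finset.card_le_card hcover).trans (Finset.card_biUnion_le_card_mul _ _ _ hagree)
    _ ≤ P.card ^ 2 * (Fintype.card V - D) ^ k := Nat.mul_le_mul_right _ hpairs

theorem exists_isSeparated_isCover {s : Set (V → β)} (hs : s.Finite) (D : ℕ) :
    ∃ N ⊆ s, (hammingRel V β D).IsSeparated N ∧ (hammingRel V β D).IsCover s N := by
  obtain ⟨N, hN⟩ := (hs.finite_subsets.subset (sep_subset _ (hammingRel V β D).IsSeparated))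
    |>.exists_maximal ⟨∅, empty_subset s, .empty⟩
  exact ⟨N, hN.prop.1, hN.prop.2, .of_maximal_isSeparated hN⟩

theorem exists_subset_range_fin {α : Type*} [Nonempty α] {s : Set α} [Finite s] {r : ℕ}
    (hs : s.ncard ≤ r) : ∃ c : Fin r → α, s ⊆ range c := by
  have := Fintype.ofFinite s
  obtain ⟨e⟩ := Function.Embedding.nonempty_of_card_le (α := s) (β := Fin r) (by
    rwa [Fintype.card_fin, ← Nat.card_eq_fintype_card])
  let c := Function.extend e Subtype.val fun _ => Classical.arbitrary α
  exact ⟨c, fun x hx => ⟨e ⟨x, hx⟩, e.injective.extend_apply _ _ _⟩⟩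

open Classical in
theorem ShatterBound.exists_isCover_rows {W : Type*} [Finite W] {R : W → V → Prop} {d D k : ℕ}
    (hR : ShatterBound R d)
    (hk : Nat.card W ^ 2 * (Fintype.card V - D) ^ k < Fintype.card V ^ k) :
    ∃ c : Fin ((k + 1) ^ d) → V → Prop, (hammingRel V Prop D).IsCover (range R) (range c) := by
  obtain ⟨N, hNR, hsep, hcov⟩ := exists_isSeparated_isCover (finite_range R) D
  have hNW : N.toFinset.card ≤ Nat.card W := by
    rw [← ncard_eq_toFinset_card']
    exact (ncard_le_ncard hNR).trans (Finite.card_range_le R)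
  obtain ⟨a, ha⟩ := exists_injOn_comp_of_isSeparated (P := N.toFinset) (by simpa using hsep)
    (lt_of_le_of_lt (by gcongr) hk)
  have hcard : N.ncard ≤ (k + 1) ^ d := calc
    N.ncard = ((fun x => x ∘ a) '' N).ncard := (InjOn.ncard_image (by simpa using ha)).symm
    _ ≤ (range fun w => R w ∘ a).ncard := by
      refine ncard_le_ncard ?_
      rw [range_comp' (fun x : V → Prop => x ∘ a) R]
      exact image_mono hNR
    _ ≤ (k + 1) ^ d := hR k a
  obtain ⟨c, hc⟩ := exists_subset_range_fin hcard
  exact ⟨c, hcov.mono hc⟩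

end Hamming

section Encoding

variable {X V : Type*}

/-- Adjacency `R` on `V`-indexed families of points of `X` is decoded from two labels in `Λ` by a
single symmetric function, which depends neither on the points nor on their labelling. -/
def HasImplicitRepresentation (R : X → X → Prop) (V Λ : Type*) : Prop :=
  ∃ G : Λ → Λ → Bool, (∀ a b, G a b = G b a) ∧
    ∀ x : V → X, ∃ F : V → Λ, ∀ i j, G (F i) (F j) = true ↔ R (x i) (x j)

theorem HasImplicitRepresentation.of_card_le {R : X → X → Prop} {Λ Λ' : Type*} [Fintype Λ]
    [Fintype Λ'] [Nonempty Λ] (h : HasImplicitRepresentation R V Λ)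
    (hcard : Fintype.card Λ ≤ Fintype.card Λ') : HasImplicitRepresentation R V Λ' := by
  obtain ⟨e⟩ := Function.Embedding.nonempty_of_card_le hcard
  obtain ⟨G, hG, hF⟩ := h
  refine ⟨fun a b => G (Function.invFun e a) (Function.invFun e b), fun _ _ => hG _ _, fun x => ?_⟩
  obtain ⟨F, hF⟩ := hF x
  exact ⟨e ∘ F, by simpa [Function.leftInverse_invFun e.injective _] using hF⟩

/-- The label of a vertex `v`: its name, its adjacencies to a net of rows indexed by `ι`, the index
of a row of the net close to the row of `v`, and the set of coordinates where the two differ. -/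
abbrev NetLabel (V ι : Type*) (D : ℕ) : Type _ :=
  V × (ι → Bool) × ι × {S : Finset V // S.card ≤ D}

open Classical in
theorem hasImplicitRepresentation_netLabel [Fintype V] {ι : Type*} {D : ℕ} {R : X → X → Prop}
    (hsymm : ∀ x y, R x y ↔ R y x)
    (hnet : ∀ x : V → X, ∃ c : ι → V → Prop,
      (hammingRel V Prop D).IsCover (range fun i j => R (x i) (x j)) (range c)) :
    HasImplicitRepresentation R V (NetLabel V ι D) := by
  let decode (a b : NetLabel V ι D) : Prop := b.2.1 a.2.2.1 = true ↔ b.1 ∉ a.2.2.2.1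
  refine ⟨fun a b => decode a b ∨ decode b a, fun a b => by simp [or_comm], fun x => ?_⟩
  obtain ⟨c, hc⟩ := hnet x
  simp only [SetRel.IsCover, forall_mem_range, exists_range_iff] at hc
  choose t ht using hc
  let F (i : V) : NetLabel V ι D :=
    (i, fun s => decide (c s i), t i, ⟨({j | R (x i) (x j) ≠ c (t i) j} : Finset V), ht i⟩)
  have hdecode : ∀ i j, decode (F i) (F j) ↔ R (x i) (x j) := fun i j => by
    simp only [decode, F, decide_eq_true_eq, Finset.mem_filter_univ]
    tauto
  exact ⟨F, fun i j => by simp [hdecode, hsymm (x j)]⟩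

theorem card_finset_card_le_le_pow [Fintype V] (D : ℕ) :
    Fintype.card {S : Finset V // S.card ≤ D} ≤ (Fintype.card V + 1) ^ D := by
  classical
  have hunion : (Finset.univ.filter fun S : Finset V => S.card ≤ D) ⊆
      (Finset.Iic D).biUnion fun i => Finset.powersetCard i Finset.univ := by
    intro S hS
    simpa using hS
  calc Fintype.card {S : Finset V // S.card ≤ D}
      = (Finset.univ.filter fun S : Finset V => S.card ≤ D).card := Fintype.card_subtype _
    _ ≤ ∑ i ∈ Finset.Iic D, (Finset.powersetCard i (Finset.univ : Finset V)).card :=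
      (Finset.card_le_card hunion).trans Finset.card_biUnion_le
    _ = ∑ i ∈ Finset.Iic D, (Fintype.card V).choose i := by simp
    _ ≤ (Fintype.card V + 1) ^ D := sum_Iic_choose_le_pow _ _

theorem card_netLabel_le_two_pow [Fintype V] {r D L : ℕ} (hL : Fintype.card V < 2 ^ L) :
    Fintype.card (NetLabel V (Fin r) D) ≤ 2 ^ (L + 2 * r + L * D) := by
  simp only [Fintype.card_prod, Fintype.card_pi_const, Fintype.card_fin, Fintype.card_bool]
  calc Fintype.card V * (2 ^ r * (r * Fintype.card {S : Finset V // S.card ≤ D}))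
      ≤ 2 ^ L * (2 ^ r * (2 ^ r * (2 ^ L) ^ D)) := by
        gcongr
        · exact Nat.lt_two_pow_self.le
        · exact (card_finset_card_le_le_pow D).trans (Nat.pow_le_pow_left hL D)
    _ = 2 ^ (L + 2 * r + L * D) := by rw [← pow_mul]; ring

end Encoding

section Parameters

theorem cast_sub_le_mul_exp_neg_div (n D : ℕ) :
    ((n - D : ℕ) : ℝ) ≤ n * Real.exp (-(D / n)) := by
  rcases le_or_gt n D with h | h
  · rw [Nat.sub_eq_zero_of_le h, Nat.cast_zero]
    positivity
  · have hn : (0 : ℝ) < n := Nat.cast_pos.2 (D.zero_le.trans_lt h)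
    calc ((n - D : ℕ) : ℝ) = n * (1 - D / n) := by rw [Nat.cast_sub h.le]; field_simp
      _ ≤ n * Real.exp (-(D / n)) := by gcongr; exact Real.one_sub_le_exp_neg _

theorem sq_mul_sub_pow_lt_pow {n D k : ℕ} (hn : 0 < n) (h : 2 * Real.log n < k * (D / n)) :
    n ^ 2 * (n - D) ^ k < n ^ k := by
  have hn' : (0 : ℝ) < n := by exact_mod_cast hn
  have hsq : (n : ℝ) ^ 2 = Real.exp (2 * Real.log n) := by
    rw [two_mul, Real.exp_add, Real.exp_log hn', sq]
  have hreal : (n : ℝ) ^ 2 * ((n - D : ℕ) : ℝ) ^ k < (n : ℝ) ^ k := by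
    calc (n : ℝ) ^ 2 * ((n - D : ℕ) : ℝ) ^ k ≤ n ^ 2 * (n * Real.exp (-(D / n))) ^ k := by
          gcongr; exact cast_sub_le_mul_exp_neg_div n D
      _ = n ^ k * Real.exp (2 * Real.log n - k * (D / n)) := by
        rw [hsq, mul_pow, ← Real.exp_nat_mul, sub_eq_add_neg, Real.exp_add]; ring_nf
      _ < n ^ k * 1 := by gcongr; exact Real.exp_lt_one_iff.2 (by linarith)
      _ = n ^ k := mul_one _
  exact_mod_cast hreal

theorem sq_mul_sub_natCeil_rpow_pow_lt_pow {n : ℕ} (hn : 0 < n) (δ : ℝ) :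
    n ^ 2 * (n - ⌈(n : ℝ) ^ (1 - δ)⌉₊) ^ (⌊2 * (n : ℝ) ^ δ * Real.log n⌋₊ + 1) <
      n ^ (⌊2 * (n : ℝ) ^ δ * Real.log n⌋₊ + 1) := by
  have hn' : (0 : ℝ) < n := by exact_mod_cast hn
  have hceil : (n : ℝ) ^ (-δ) ≤ ⌈(n : ℝ) ^ (1 - δ)⌉₊ / n := by
    rw [le_div_iff₀ hn', ← Real.rpow_add_one hn'.ne', neg_add_eq_sub]
    exact Nat.le_ceil _
  refine sq_mul_sub_pow_lt_pow hn ?_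
  push_cast
  calc 2 * Real.log n = 2 * (n : ℝ) ^ δ * Real.log n * (n : ℝ) ^ (-δ) := by
        rw [Real.rpow_neg hn'.le]; field_simp
    _ < (⌊2 * (n : ℝ) ^ δ * Real.log n⌋₊ + 1) * (n : ℝ) ^ (-δ) := by
      gcongr; exact Nat.lt_floor_add_one _
    _ ≤ (⌊2 * (n : ℝ) ^ δ * Real.log n⌋₊ + 1) * (⌈(n : ℝ) ^ (1 - δ)⌉₊ / n) := by gcongr

theorem isBigO_natCast_rpow_of_le {a b : ℝ} (hab : a ≤ b) :
    (fun n : ℕ => (n : ℝ) ^ a) =O[atTop] fun n : ℕ => (n : ℝ) ^ b :=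
  .of_norm_eventuallyLE <| (eventually_ge_atTop 1).mono fun n hn => by
    simpa [abs_of_nonneg, Real.rpow_nonneg] using
      Real.rpow_le_rpow_of_exponent_le (Nat.one_le_cast.2 hn) hab

theorem isBigO_log_natCast_rpow {a : ℝ} (ha : 0 < a) :
    (fun n : ℕ => Real.log n) =O[atTop] fun n : ℕ => (n : ℝ) ^ a :=
  (isLittleO_log_rpow_atTop ha).isBigO.comp_tendsto tendsto_natCast_atTop_atTop

theorem isBigO_const_natCast_rpow {a : ℝ} (ha : 0 ≤ a) (c : ℝ) :
    (fun _ : ℕ => c) =O[atTop] fun n : ℕ => (n : ℝ) ^ a :=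
  (isBigO_const_const c one_ne_zero _).trans (by simpa using isBigO_natCast_rpow_of_le ha)

theorem isBigO_natLog_add_one {a : ℝ} (ha : 0 < a) :
    (fun n : ℕ => ((Nat.log 2 n + 1 : ℕ) : ℝ)) =O[atTop] fun n : ℕ => (n : ℝ) ^ a := by
  have hlog : (fun n : ℕ => (Nat.log 2 n : ℝ)) =O[atTop] fun n : ℕ => Real.log n :=
    .of_bound (Real.log 2)⁻¹ <| .of_forall fun n => by
      simpa [Real.logb, div_eq_inv_mul, abs_of_nonneg (Real.log_natCast_nonneg n)] using
        Real.natLog_le_logb n 2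
  simpa using (hlog.trans (isBigO_log_natCast_rpow ha)).add (isBigO_const_natCast_rpow ha.le 1)

theorem isBigO_natCeil_rpow {a : ℝ} (ha : 0 < a) :
    (fun n : ℕ => (⌈(n : ℝ) ^ a⌉₊ : ℝ)) =O[atTop] fun n : ℕ => (n : ℝ) ^ a :=
  isEquivalent_nat_ceil.isBigO.comp_tendsto
    ((tendsto_rpow_atTop ha).comp tendsto_natCast_atTop_atTop)

theorem isBigO_natFloor_rpow_mul_log {a b : ℝ} (ha : 0 ≤ a) (hab : a < b) :
    (fun n : ℕ => (⌊2 * (n : ℝ) ^ a * Real.log n⌋₊ : ℝ)) =O[atTop] fun n : ℕ => (n : ℝ) ^ b := by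
  have hmul : (fun n : ℕ => 2 * (n : ℝ) ^ a * Real.log n) =O[atTop]
      fun n : ℕ => (n : ℝ) ^ a * (n : ℝ) ^ (b - a) :=
    ((isBigO_refl _ _).const_mul_left 2).mul (isBigO_log_natCast_rpow (sub_pos.2 hab))
  have hfloor : (fun n : ℕ => (⌊2 * (n : ℝ) ^ a * Real.log n⌋₊ : ℝ)) =O[atTop]
      fun n : ℕ => 2 * (n : ℝ) ^ a * Real.log n :=
    .of_norm_le fun n => by
      have : 0 ≤ 2 * (n : ℝ) ^ a * Real.log n := by positivity
      simpa [abs_of_nonneg this] using Nat.floor_le this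
  refine (hfloor.trans hmul).congr_right fun n => ?_
  rw [← Real.rpow_add_of_nonneg n.cast_nonneg ha (sub_nonneg.2 hab.le), add_sub_cancel]

theorem exists_sample_parameters (d : ℕ) :
    ∃ ε : ℝ, 0 < ε ∧ ∃ C : ℝ, 0 < C ∧ ∀ n : ℕ, 1 ≤ n → ∃ k D L : ℕ,
      n ^ 2 * (n - D) ^ k < n ^ k ∧ n < 2 ^ L ∧
        ((L + 2 * (k + 1) ^ d + L * D : ℕ) : ℝ) ≤ C * (n : ℝ) ^ (1 - ε) := by
  obtain ⟨δ, hδ, hδd⟩ : ∃ δ : ℝ, 0 < δ ∧ 2 * δ * d + 2 * δ = 1 :=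
    ⟨(2 * d + 2)⁻¹, by positivity, by field_simp⟩
  have hδ_le : 2 * δ ≤ 1 := by nlinarith [d.cast_nonneg (α := ℝ)]
  let k (n : ℕ) : ℕ := ⌊2 * (n : ℝ) ^ δ * Real.log n⌋₊ + 1
  let D (n : ℕ) : ℕ := ⌈(n : ℝ) ^ (1 - δ)⌉₊
  let L (n : ℕ) : ℕ := Nat.log 2 n + 1
  have hL : (fun n => (L n : ℝ)) =O[atTop] fun n : ℕ => (n : ℝ) ^ (δ / 2) :=
    isBigO_natLog_add_one (half_pos hδ)
  have hk : (fun n => ((k n : ℝ) + 1) ^ d) =O[atTop] fun n : ℕ => (n : ℝ) ^ (2 * δ * d) := by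
    have hbase : (fun n => (k n : ℝ) + 1) =O[atTop] fun n : ℕ => (n : ℝ) ^ (2 * δ) := by
      simpa [k, add_assoc] using (isBigO_natFloor_rpow_mul_log hδ.le (by linarith)).add
        (isBigO_const_natCast_rpow (by linarith) (1 + 1))
    simpa [Real.rpow_mul_natCast] using hbase.pow d
  have hLD : (fun n => (L n : ℝ) * D n) =O[atTop] fun n : ℕ => (n : ℝ) ^ (1 - δ / 2) := by
    refine (hL.mul (isBigO_natCeil_rpow (by linarith))).congr_right fun n => ?_
    rw [← Real.rpow_add_of_nonneg n.cast_nonneg (by linarith) (by linarith)]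
    ring_nf
  have htotal : (fun n => ((L n + 2 * (k n + 1) ^ d + L n * D n : ℕ) : ℝ)) =O[atTop]
      fun n : ℕ => (n : ℝ) ^ (1 - δ / 2) := by
    push_cast
    exact ((hL.trans (isBigO_natCast_rpow_of_le (by linarith))).add
      ((hk.trans (isBigO_natCast_rpow_of_le (by linarith))).const_mul_left 2)).add hLD
  obtain ⟨C, hC, hbound⟩ := bound_of_isBigO_nat_atTop htotal
  refine ⟨δ / 2, half_pos hδ, C, hC, fun n hn => ⟨k n, D n, L n,
    sq_mul_sub_natCeil_rpow_pow_lt_pow hn δ, Nat.lt_pow_succ_log_self one_lt_two n, ?_⟩⟩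
  have hpos : 0 < (n : ℝ) ^ (1 - δ / 2) := Real.rpow_pos_of_pos (Nat.cast_pos.2 hn) _
  simpa only [Real.norm_natCast, Real.norm_of_nonneg hpos.le] using hbound hpos.ne'

end Parameters

section Main

theorem ShatterBound.exists_hasImplicitRepresentation {X : Type*} {R : X → X → Prop} {d : ℕ}
    (hR : ShatterBound R d) (hsymm : ∀ x y, R x y ↔ R y x) :
    ∃ ε : ℝ, 0 < ε ∧ ∃ C : ℝ, 0 < C ∧ ∀ n : ℕ, 1 ≤ n → ∃ m : ℕ,
      (m : ℝ) ≤ C * (n : ℝ) ^ (1 - ε) ∧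
        HasImplicitRepresentation R (Fin n) (Fin m → Bool) := by
  classical
  obtain ⟨ε, hε, C, hC, hparams⟩ := exists_sample_parameters d
  refine ⟨ε, hε, C, hC, fun n hn => ?_⟩
  obtain ⟨k, D, L, hk, hL, hm⟩ := hparams n hn
  refine ⟨_, hm, ?_⟩
  have hnet (x : Fin n → X) :=
    (hR.comp x x).exists_isCover_rows (D := D) (k := k) (by simpa using hk)
  have : Nonempty (NetLabel (Fin n) (Fin ((k + 1) ^ d)) D) :=
    ⟨⟨0, hn⟩, fun _ => false, ⟨0, by positivity⟩, ∅, by simp⟩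
  refine (hasImplicitRepresentation_netLabel hsymm hnet).of_card_le ?_
  simpa using card_netLabel_le_two_pow (V := Fin n) (r := (k + 1) ^ d) (D := D) (by simpa using hL)

theorem semialgebraic_implicit_representation_general {τ T K : Type*} [Finite T] [CommRing K]
    [LinearOrder K] [IsStrictOrderedRing K] (f : T → MvPolynomial (τ ⊕ τ) K)
    (hsymm : ∀ t, ∀ x y : τ → K,
      MvPolynomial.eval (Sum.elim x y) (f t) = MvPolynomial.eval (Sum.elim y x) (f t))
    (σ : T → Bool) :
    ∃ ε : ℝ, 0 < ε ∧ ∃ C : ℝ, 0 < C ∧ ∀ n : ℕ, 1 ≤ n → ∃ m : ℕ,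
      (m : ℝ) ≤ C * (n : ℝ) ^ (1 - ε) ∧
        HasImplicitRepresentation (fun x y : τ → K =>
          ∀ t, cond (σ t) (0 < MvPolynomial.eval (Sum.elim x y) (f t))
            (0 ≤ MvPolynomial.eval (Sum.elim x y) (f t))) (Fin n) (Fin m → Bool) := by
  cases nonempty_fintype T
  choose d hd using fun t => exists_shatterBound_sign_eval (f t) (σ t)
  exact (ShatterBound.forall_index hd).exists_hasImplicitRepresentation fun x y => by
    simp only [hsymm _ x y]

end Main

/-- **Main theorem.** Every semi-algebraic family of graphs (given by symmetric polynomials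
`f t` in `2q` variables together with sign conditions `σ t`, where `σ t = true` means
"`> 0`" and `σ t = false` means "`≥ 0`") admits an implicit representation using
`O(n^{1−ε})` bits per vertex, for some `ε > 0` depending only on the family. -/
theorem semialgebraic_implicit_representation (q s : ℕ) (hq : 1 ≤ q)
    (f : Fin s → MvPolynomial (Fin q ⊕ Fin q) ℝ)
    (hsymm : ∀ t, ∀ x y : Fin q → ℝ,
      MvPolynomial.eval (Sum.elim x y) (f t) = MvPolynomial.eval (Sum.elim y x) (f t))
    (σ : Fin s → Bool) :
    ∃ ε : ℝ, 0 < ε ∧ ∃ C : ℝ, 0 < C ∧ ∀ n : ℕ, 1 ≤ n →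
      ∃ m : ℕ, (m : ℝ) ≤ C * (n : ℝ) ^ ((1 : ℝ) - ε) ∧
        ∃ G : (Fin m → Bool) → (Fin m → Bool) → Bool,
          (∀ a b, G a b = G b a) ∧
          ∀ x : Fin n → (Fin q → ℝ),
            ∃ F : Fin n → (Fin m → Bool),
              ∀ i j : Fin n, i ≠ j →
                (G (F i) (F j) = true ↔
                  ∀ t : Fin s,
                    cond (σ t) (0 < MvPolynomial.eval (Sum.elim (x i) (x j)) (f t))
                      (0 ≤ MvPolynomial.eval (Sum.elim (x i) (x j)) (f t))) := by
  obtain ⟨ε, hε, C, hC, hrep⟩ := semialgebraic_implicit_representation_general f hsymm σ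
  refine ⟨ε, hε, C, hC, fun n hn => ?_⟩
  obtain ⟨m, hm, G, hG, hF⟩ := hrep n hn
  exact ⟨m, hm, G, hG, fun x => (hF x).imp fun _ hdecode i j _ => hdecode i j⟩
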